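/- The function J3 = L1 + L2 + L3 (total angular momentum component sum) is a constant of motion for the Hamiltonian H = (1/2)(p1² + p2² + p3²) + b(L1 + L2 + L3) + (1/2)(b² + k)((q2−q1)² + (q3−q2)² + (q1−q3)²): the Poisson bracket {H, J3} = 0. -/

import Mathlib

open scoped BigOperators

/-- Partial derivative of a function on phase space ℝ⁶ in the i-th coordinate. -/
noncomputable def pd (i : Fin 6) (f : (Fin 6 → ℝ) → ℝ) (x : Fin 6 → ℝ) : ℝ :=
  fderiv ℝ f x (Pi.single i 1)

/-- Canonical Poisson bracket on ℝ⁶ with coordinates (q1,q2,q3,p1,p2,p3). -/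
noncomputable def pb (F G : (Fin 6 → ℝ) → ℝ) (x : Fin 6 → ℝ) : ℝ :=
  (pd 0 F x * pd 3 G x - pd 3 F x * pd 0 G x) +
  (pd 1 F x * pd 4 G x - pd 4 F x * pd 1 G x) +
  (pd 2 F x * pd 5 G x - pd 5 F x * pd 2 G x)

/-- Angular momentum components: L1 = q2 p3 − q3 p2, etc. -/
def L1 (x : Fin 6 → ℝ) : ℝ := x 1 * x 5 - x 2 * x 4
def L2 (x : Fin 6 → ℝ) : ℝ := x 2 * x 3 - x 0 * x 5
def L3 (x : Fin 6 → ℝ) : ℝ := x 0 * x 4 - x 1 * x 3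

/-- The Hamiltonian of the coupled oscillators with magnetic terms. -/
noncomputable def Ham (b k : ℝ) (x : Fin 6 → ℝ) : ℝ :=
  (1/2) * (x 3 ^ 2 + x 4 ^ 2 + x 5 ^ 2) + b * (L1 x + L2 x + L3 x) +
  (1/2) * (b ^ 2 + k) * ((x 1 - x 0) ^ 2 + (x 2 - x 1) ^ 2 + (x 0 - x 2) ^ 2)

/-- J2 = p1 + p2 + p3. -/
def J2 (x : Fin 6 → ℝ) : ℝ := x 3 + x 4 + x 5

/-- J3 = L1 + L2 + L3. -/
def J3 (x : Fin 6 → ℝ) : ℝ := L1 x + L2 x + L3 x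

/-!
The bracket `{F, G}` is the derivative of `F` along the Hamiltonian vector field of `G`, and for
`G = n · L` this field is the infinitesimal rotation `(n × q, n × p)` of position and momentum about
the axis `n`. It therefore annihilates `|q|²`, `|p|²` and `n · q`. Since `J3` is `n · L` for
`n = (1, 1, 1)`, and the coupling term of the Hamiltonian is a multiple of
`3 |q|² - (q₁ + q₂ + q₃)²`, every summand of the Hamiltonian Poisson-commutes with `J3`.
-/

/-- The Hamiltonian vector field `X_G = (∂G/∂p, -∂G/∂q)` of a function `G` on phase space; its
entries are the right-hand sides of Hamilton's equations. -/
noncomputable def hamiltonianVectorField (G : (Fin 6 → ℝ) → ℝ) (x : Fin 6 → ℝ) : Fin 6 → ℝ :=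
  ![pd 3 G x, pd 4 G x, pd 5 G x, -pd 0 G x, -pd 1 G x, -pd 2 G x]

section PoissonBracket

variable (F G : (Fin 6 → ℝ) → ℝ) (x : Fin 6 → ℝ)

theorem fderiv_apply_eq_sum_pd (v : Fin 6 → ℝ) : fderiv ℝ F x v = ∑ i, v i * pd i F x := by
  conv_lhs => rw [pi_eq_sum_univ' v]
  simp only [map_sum, map_smul, smul_eq_mul, pd]

theorem pb_eq_fderiv_hamiltonianVectorField :
    pb F G x = fderiv ℝ F x (hamiltonianVectorField G x) := by
  simp only [pb, hamiltonianVectorField, fderiv_apply_eq_sum_pd, Fin.sum_univ_six,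
    Matrix.cons_val]
  ring

theorem pb_self : pb F F x = 0 := by
  simp only [pb]
  ring

theorem pb_coord_left (i : Fin 6) : pb (fun y => y i) G x = hamiltonianVectorField G x i := by
  rw [pb_eq_fderiv_hamiltonianVectorField, (hasFDerivAt_apply i x).fderiv,
    ContinuousLinearMap.proj_apply]

theorem pb_const_mul_left (c : ℝ) : pb (fun y => c * F y) G x = c * pb F G x := by
  change pb (c • F) G x = c • pb F G x
  simp only [pb_eq_fderiv_hamiltonianVectorField, fderiv_const_smul_field, Pi.smul_apply,
    smul_apply]

variable {F x} {F₁ F₂ : (Fin 6 → ℝ) → ℝ}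

theorem pb_add_left (h₁ : DifferentiableAt ℝ F₁ x) (h₂ : DifferentiableAt ℝ F₂ x) :
    pb (fun y => F₁ y + F₂ y) G x = pb F₁ G x + pb F₂ G x := by
  simp only [pb_eq_fderiv_hamiltonianVectorField, fderiv_fun_add h₁ h₂, add_apply]

theorem pb_pow_left (h : DifferentiableAt ℝ F x) (m : ℕ) :
    pb (fun y => F y ^ m) G x = m * F x ^ (m - 1) * pb F G x := by
  simp only [pb_eq_fderiv_hamiltonianVectorField, fderiv_fun_pow m h, smul_apply,
    smul_eq_mul, nsmul_eq_mul]

end PoissonBracket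

/-- The angular momentum `n · L` about the axis `n`, the generator of simultaneous rotations of
position and momentum about `n`. The axis need not be a unit vector, so that `J3` is the case
`n = (1, 1, 1)`. -/
def axialAngularMomentum (n : Fin 3 → ℝ) (x : Fin 6 → ℝ) : ℝ :=
  n 0 * L1 x + n 1 * L2 x + n 2 * L3 x

theorem J3_eq_axialAngularMomentum_one : J3 = axialAngularMomentum 1 := by
  funext x
  simp only [J3, axialAngularMomentum, Pi.one_apply, one_mul]

section AxialRotation

variable (n : Fin 3 → ℝ) (x : Fin 6 → ℝ)

theorem differentiable_axialAngularMomentum : Differentiable ℝ (axialAngularMomentum n) := by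
  unfold axialAngularMomentum L1 L2 L3
  fun_prop

theorem fderiv_axialAngularMomentum_apply (v : Fin 6 → ℝ) :
    fderiv ℝ (axialAngularMomentum n) x v =
      n 0 * (x 1 * v 5 + v 1 * x 5 - (x 2 * v 4 + v 2 * x 4)) +
      n 1 * (x 2 * v 3 + v 2 * x 3 - (x 0 * v 5 + v 0 * x 5)) +
      n 2 * (x 0 * v 4 + v 0 * x 4 - (x 1 * v 3 + v 1 * x 3)) := by
  have coord (i : Fin 6) := hasFDerivAt_apply (𝕜 := ℝ) i x
  have minor (i j k l : Fin 6) :=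
    ((coord i).mul (coord j)).sub ((coord k).mul (coord l))
  have derivative : HasFDerivAt (axialAngularMomentum n) _ x :=
    (((minor 1 5 2 4).const_mul (n 0)).add ((minor 2 3 0 5).const_mul (n 1))).add
      ((minor 0 4 1 3).const_mul (n 2))
  rw [derivative.fderiv]
  simp only [add_apply, smul_apply, sub_apply, ContinuousLinearMap.proj_apply, smul_eq_mul]
  ring

theorem hamiltonianVectorField_axialAngularMomentum :
    hamiltonianVectorField (axialAngularMomentum n) x =
      ![n 1 * x 2 - n 2 * x 1, n 2 * x 0 - n 0 * x 2, n 0 * x 1 - n 1 * x 0,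
        n 1 * x 5 - n 2 * x 4, n 2 * x 3 - n 0 * x 5, n 0 * x 4 - n 1 * x 3] := by
  ext i
  fin_cases i <;>
    simp [hamiltonianVectorField, pd, fderiv_axialAngularMomentum_apply] <;> ring

theorem pb_position_normSq_axialAngularMomentum :
    pb (fun y => y 0 ^ 2 + y 1 ^ 2 + y 2 ^ 2) (axialAngularMomentum n) x = 0 := by
  simp (disch := fun_prop) only [pb_add_left, pb_pow_left, pb_coord_left,
    hamiltonianVectorField_axialAngularMomentum, Matrix.cons_val]
  ring

theorem pb_momentum_normSq_axialAngularMomentum :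
    pb (fun y => y 3 ^ 2 + y 4 ^ 2 + y 5 ^ 2) (axialAngularMomentum n) x = 0 := by
  simp (disch := fun_prop) only [pb_add_left, pb_pow_left, pb_coord_left,
    hamiltonianVectorField_axialAngularMomentum, Matrix.cons_val]
  ring

theorem pb_axial_position_axialAngularMomentum :
    pb (fun y => n 0 * y 0 + n 1 * y 1 + n 2 * y 2) (axialAngularMomentum n) x = 0 := by
  simp (disch := fun_prop) only [pb_add_left, pb_const_mul_left, pb_coord_left,
    hamiltonianVectorField_axialAngularMomentum, Matrix.cons_val]
  ring

end AxialRotation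

theorem pb_momentum_normSq_J3 (x : Fin 6 → ℝ) :
    pb (fun y => y 3 ^ 2 + y 4 ^ 2 + y 5 ^ 2) J3 x = 0 := by
  rw [J3_eq_axialAngularMomentum_one, pb_momentum_normSq_axialAngularMomentum]

theorem pb_position_sum_J3 (x : Fin 6 → ℝ) : pb (fun y => y 0 + y 1 + y 2) J3 x = 0 := by
  simpa only [J3_eq_axialAngularMomentum_one, Pi.one_apply, one_mul] using
    pb_axial_position_axialAngularMomentum 1 x

theorem pb_sum_sq_position_sub_J3 (x : Fin 6 → ℝ) :
    pb (fun y => (y 1 - y 0) ^ 2 + (y 2 - y 1) ^ 2 + (y 0 - y 2) ^ 2) J3 x = 0 := by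
  have lagrange : (fun y : Fin 6 → ℝ => (y 1 - y 0) ^ 2 + (y 2 - y 1) ^ 2 + (y 0 - y 2) ^ 2) =
      fun y => 3 * (y 0 ^ 2 + y 1 ^ 2 + y 2 ^ 2) + -1 * (y 0 + y 1 + y 2) ^ 2 := by
    funext y
    ring
  rw [lagrange, pb_add_left _ (by fun_prop) (by fun_prop), pb_const_mul_left,
    pb_const_mul_left, pb_pow_left _ (by fun_prop), pb_position_sum_J3,
    J3_eq_axialAngularMomentum_one, pb_position_normSq_axialAngularMomentum]
  ring

/-- J3 = L1+L2+L3 is a constant of motion: {H, J3} = 0 identically. -/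
theorem stmt1 (b k : ℝ) (x : Fin 6 → ℝ) : pb (Ham b k) J3 x = 0 := by
  have hJ3 : DifferentiableAt ℝ J3 x :=
    J3_eq_axialAngularMomentum_one ▸ differentiable_axialAngularMomentum 1 x
  have hHam : Ham b k = fun y => (1 / 2) * (y 3 ^ 2 + y 4 ^ 2 + y 5 ^ 2) + b * J3 y +
      (1 / 2) * (b ^ 2 + k) * ((y 1 - y 0) ^ 2 + (y 2 - y 1) ^ 2 + (y 0 - y 2) ^ 2) := rfl
  rw [hHam, pb_add_left _ (by fun_prop) (by fun_prop), pb_add_left _ (by fun_prop) (by fun_prop),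
    pb_const_mul_left, pb_const_mul_left, pb_const_mul_left, pb_momentum_normSq_J3, pb_self,
    pb_sum_sq_position_sub_J3]
  ring
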